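/- Let X be a finite set and μ a positive measure on 2^X with μ({x}) > 0 for every x ∈ X. Then D^μ restricted to the set of partial orders on X is a metric: for any two distinct partial orders ≿ and ⊵ on X, D^μ(≿,⊵) > 0. -/

import Mathlib

open Classical Finset symmDiff

section PrefDefs

variable {X : Type*}

/-- The asymmetric part `R^>` of a binary relation `R`. -/
def asymPart (R : X → X → Prop) : X → X → Prop := fun x y => R x y ∧ ¬ R y x

/-- `R` is acyclic: there is no cycle of pairwise distinct elements
`z_0 R^> z_1 R^> ⋯ R^> z_k R^> z_0`. -/
def AcyclicRel (R : X → X → Prop) : Prop :=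
  ¬ ∃ (k : ℕ) (z : Fin (k + 1) → X), Function.Injective z ∧
      ∀ i : Fin (k + 1), asymPart R (z i) (z (i + 1))

/-- An acyclic order: a reflexive acyclic binary relation. -/
def AcyclicOrd (R : X → X → Prop) : Prop := Reflexive R ∧ AcyclicRel R

/-- `M(S,R)`: the set of `R`-maximal elements of `S`. -/
noncomputable def MaxSet [DecidableEq X] (S : Finset X) (R : X → X → Prop) : Finset X :=
  S.filter fun x => ∀ y ∈ S, ¬ asymPart R y x

/-- The μ-top-difference semimetric, where the measure μ is given by the
weights `w x = μ {x}`. -/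
noncomputable def Dmu [Fintype X] [DecidableEq X] (w : X → ℝ) (R R' : X → X → Prop) : ℝ :=
  ∑ S : Finset X, ∑ x ∈ symmDiff (MaxSet S R) (MaxSet S R'), w x

/-- The top-difference semimetric `D`. -/
noncomputable def Dtop [Fintype X] [DecidableEq X] (R R' : X → X → Prop) : ℕ :=
  ∑ S : Finset X, (symmDiff (MaxSet S R) (MaxSet S R')).card

/-- `≿ ⊕ (a,b)`: if `b ∼ a` delete `(b,a)`, if `a, b` are `≿`-incomparable add `(a,b)`. -/
def oplusR (R : X → X → Prop) (a b : X) : X → X → Prop :=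
  fun x y => (R x y ∧ ¬(R b a ∧ x = b ∧ y = a)) ∨ (¬ R b a ∧ x = a ∧ y = b)

/-- `≿ ⊖ (a,b)`: delete the pair `(a,b)`. -/
def ominusR (R : X → X → Prop) (a b : X) : X → X → Prop :=
  fun x y => R x y ∧ ¬(x = a ∧ y = b)

/-- `≿ → ≿_0 ↠ ⊵` : `R0` is a one-step perturbation of `R` toward `R'`. -/
def OneStep (R R0 R' : X → X → Prop) : Prop :=
  AcyclicOrd R0 ∧
  ((∃ a b, asymPart R a b ∧ ¬ asymPart R' a b ∧
      (∀ x, asymPart R' x b → asymPart R x b) ∧ R0 = ominusR R a b) ∨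
   (∃ a b, ¬ asymPart R a b ∧ ¬ asymPart R b a ∧ asymPart R' a b ∧ R0 = oplusR R a b))

/-- `Q` is in-between `R` and `R'` : `Q` is an n-step perturbation of `R` toward `R'`
for some positive integer n. -/
def InBetween (R R' Q : X → X → Prop) : Prop :=
  ∃ (n : ℕ) (c : Fin (n + 1) → (X → X → Prop)),
    OneStep R (c 0) R' ∧
    (∀ i : Fin n, OneStep (c i.castSucc) (c i.succ) R') ∧
    c (Fin.last n) = Q

/-- `N(b,≿)`: the number of `x ≠ b` with not `x ≻ b`. -/
noncomputable def Nnum [Fintype X] (R : X → X → Prop) (b : X) : ℕ :=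
  (Finset.univ.filter fun x => x ≠ b ∧ ¬ asymPart R x b).card

/-- `≿_{ab}`: the partial order whose asymmetric part is `(X \ {a,b}) × {a,b}`. -/
def RabRel (a b : X) : X → X → Prop :=
  fun x y => x = y ∨ ((x ≠ a ∧ x ≠ b) ∧ (y = a ∨ y = b))

/-- `≿_{ab}^+`: as `≿_{ab}` but with `a` ranked strictly above `b`. -/
def RabPlusRel (a b : X) : X → X → Prop :=
  fun x y => RabRel a b x y ∨ (x = a ∧ y = b)

/-- `d` is a semimetric on the set of acyclic orders on `X`. -/
def IsSemimetricOn (d : (X → X → Prop) → (X → X → Prop) → ℝ) : Prop :=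
  (∀ R R', AcyclicOrd R → AcyclicOrd R' → 0 ≤ d R R') ∧
  (∀ R, AcyclicOrd R → d R R = 0) ∧
  (∀ R R', AcyclicOrd R → AcyclicOrd R' → d R R' = d R' R) ∧
  (∀ R R' R'', AcyclicOrd R → AcyclicOrd R' → AcyclicOrd R'' →
    d R R'' ≤ d R R' + d R' R'')

/-- Axiom 1. -/
def Axiom1 (d : (X → X → Prop) → (X → X → Prop) → ℝ) : Prop :=
  ∀ R R0 R' : X → X → Prop, AcyclicOrd R → AcyclicOrd R' →
    InBetween R R' R0 → d R R' = d R R0 + d R0 R'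

/-- Axiom 2. -/
def Axiom2 (d : (X → X → Prop) → (X → X → Prop) → ℝ) : Prop :=
  ∀ a b : X, a ≠ b → d (RabRel a b) (RabPlusRel a b) = 1

/-- Axiom 3. -/
def Axiom3 [Fintype X] (d : (X → X → Prop) → (X → X → Prop) → ℝ) : Prop :=
  (∀ (R : X → X → Prop) (a b : X), AcyclicOrd R → a ≠ b →
      ¬ asymPart R a b → ¬ asymPart R b a → AcyclicOrd (oplusR R a b) →
      d R (oplusR R a b) = (2 : ℝ) ^ (Nnum R b - 1) * d (RabRel a b) (RabPlusRel a b)) ∧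
  (∀ (R : X → X → Prop) (a b : X), AcyclicOrd R → asymPart R a b →
      d R (ominusR R a b) = (2 : ℝ) ^ (Nnum R b) * d (RabRel a b) (RabPlusRel a b))

/-- Axiom 4. -/
def Axiom4 (d : (X → X → Prop) → (X → X → Prop) → ℝ) : Prop :=
  ∀ R R' : X → X → Prop, AcyclicOrd R → AcyclicOrd R' →
    (∀ x y, asymPart R x y ↔ asymPart R' x y) → d R R' = 0

end PrefDefs

/-!
`M({a, b}, R)` misses `b` exactly when `a R^> b`, so the choices from two-element sets determine
the asymmetric part of a relation, and a reflexive antisymmetric relation is the union of its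
asymmetric part with equality.
-/

section TopDifference

variable {X : Type*} {R R' : X → X → Prop}

theorem rel_iff_eq_or_asymPart [Std.Refl R] [Std.Antisymm R] {a b : X} :
    R a b ↔ a = b ∨ asymPart R a b := by
  constructor
  · intro hab
    by_cases hba : R b a
    · exact .inl (antisymm hab hba)
    · exact .inr ⟨hab, hba⟩
  · rintro (rfl | hab)
    · exact refl a
    · exact hab.1

theorem asymPart_inj [Std.Refl R] [Std.Antisymm R] [Std.Refl R'] [Std.Antisymm R'] :
    asymPart R = asymPart R' ↔ R = R' := by
  refine ⟨fun h => ?_, congrArg asymPart⟩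
  ext a b
  rw [rel_iff_eq_or_asymPart (R := R), rel_iff_eq_or_asymPart (R := R'), h]

theorem not_asymPart_self (R : X → X → Prop) (a : X) : ¬ asymPart R a a :=
  fun h => h.2 h.1

variable [DecidableEq X]

theorem mem_maxSet {S : Finset X} {x : X} :
    x ∈ MaxSet S R ↔ x ∈ S ∧ ∀ y ∈ S, ¬ asymPart R y x :=
  mem_filter

theorem right_mem_maxSet_pair {a b : X} : b ∈ MaxSet {a, b} R ↔ ¬ asymPart R a b := by
  simp [mem_maxSet, not_asymPart_self]

theorem forall_maxSet_eq_iff :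
    (∀ S, MaxSet S R = MaxSet S R') ↔ asymPart R = asymPart R' := by
  constructor
  · intro h
    ext a b
    rw [← not_iff_not, ← right_mem_maxSet_pair, ← right_mem_maxSet_pair, h]
  · intro h S
    ext x
    rw [mem_maxSet, mem_maxSet, h]

theorem sum_symmDiff_pos_iff {M : Type*} [AddCommMonoid M] [PartialOrder M]
    [IsOrderedCancelAddMonoid M] {w : X → M} (hw : ∀ x, 0 < w x) {s t : Finset X} :
    0 < ∑ x ∈ s ∆ t, w x ↔ s ≠ t := by
  rw [← symmDiff_nonempty]
  refine ⟨fun h => ?_, sum_pos fun x _ => hw x⟩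
  exact nonempty_of_sum_ne_zero h.ne'

theorem dmu_pos_iff [Fintype X] {w : X → ℝ} (hw : ∀ x, 0 < w x) :
    0 < Dmu w R R' ↔ asymPart R ≠ asymPart R' := by
  have summand_nonneg (S : Finset X) : 0 ≤ ∑ x ∈ MaxSet S R ∆ MaxSet S R', w x :=
    sum_nonneg fun x _ => (hw x).le
  calc 0 < Dmu w R R'
      ↔ ∃ S, 0 < ∑ x ∈ MaxSet S R ∆ MaxSet S R', w x := by
        simp only [Dmu, sum_pos_iff_of_nonneg fun S _ => summand_nonneg S, mem_univ, true_and]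
    _ ↔ ∃ S, MaxSet S R ≠ MaxSet S R' := exists_congr fun _ => sum_symmDiff_pos_iff hw
    _ ↔ asymPart R ≠ asymPart R' := by rw [← not_forall, forall_maxSet_eq_iff]

theorem stmt_8_general [Fintype X] [Std.Refl R] [Std.Antisymm R] [Std.Refl R'] [Std.Antisymm R']
    {w : X → ℝ} (hw : ∀ x, 0 < w x) (hne : R ≠ R') : 0 < Dmu w R R' :=
  (dmu_pos_iff hw).2 (asymPart_inj.not.2 hne)

end TopDifference

/-- for a measure with strictly positive weights, `D^μ` is a metric on
the set of partial orders: distinct partial orders are at positive distance. -/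
theorem stmt_8 {X : Type*} [Fintype X] [DecidableEq X]
    (w : X → ℝ) (hw : ∀ x, 0 < w x)
    (R R' : X → X → Prop)
    (hR : Reflexive R ∧ Transitive R ∧ AntiSymmetric R)
    (hR' : Reflexive R' ∧ Transitive R' ∧ AntiSymmetric R')
    (hne : R ≠ R') :
    0 < Dmu w R R' := by
  obtain ⟨_, _⟩ : Std.Refl R ∧ Std.Antisymm R := ⟨⟨hR.1⟩, ⟨hR.2.2⟩⟩
  obtain ⟨_, _⟩ : Std.Refl R' ∧ Std.Antisymm R' := ⟨⟨hR'.1⟩, ⟨hR'.2.2⟩⟩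
  exact stmt_8_general hw hne
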